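/- arXiv:1309.3526 — 10 statements merged into one kernel-verified Lean document; each statement's English description precedes it below -/
import Mathlib

section
/- Let A be a unital C*-algebra. For all a, b, c, d in A and every φ in the dual A*, the Jordan identity holds with the functional in the last slot: {a,b,{c,d,φ}} = {{a,b,c},d,φ} - {c,{b,a,d},φ} + {c,d,{a,b,φ}} (an equality of functionals on A). -/
noncomputable section

variable {A : Type*} [NormedRing A] [StarRing A] [CStarRing A]
  [NormedAlgebra ℂ A] [CompleteSpace A] [StarModule ℂ A]

/-- The triple product `{a,b,c} = (a b* c + c b* a)/2` on a C*-algebra. -/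
def tp (a b c : A) : A := (2 : ℂ)⁻¹ • (a * star b * c + c * star b * a)

/-- The module triple product `{a,b,φ} = {φ,b,a}`, given by `x ↦ φ({b,a,x})`. -/
def tOut (a b : A) (φ : A → ℂ) : A → ℂ := fun x => φ (tp b a x)

/-- The module triple product `{a,φ,b}`, given by `x ↦ conj (φ ({a,x,b}))`. -/
def tMid (a : A) (φ : A → ℂ) (b : A) : A → ℂ := fun x => starRingEnd ℂ (φ (tp a x b))

/-- The adjoint functional `φ*(x) = conj (φ (x*))`. -/
def fstar (φ : A → ℂ) : A → ℂ := fun x => starRingEnd ℂ (φ (star x))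

/-- The module action `a·φ : x ↦ φ(x a)`. -/
def actL (a : A) (φ : A → ℂ) : A → ℂ := fun x => φ (x * a)

/-- The module action `φ·a : x ↦ φ(a x)`. -/
def actR (φ : A → ℂ) (a : A) : A → ℂ := fun x => φ (a * x)

/-- The commutator `[φ,a] = φ·a - a·φ : x ↦ φ(a x - x a)`. -/
def fcomm (φ : A → ℂ) (a : A) : A → ℂ := fun x => φ (a * x - x * a)

/-- The inner binary derivation `D_ψ(x) = ψ·x - x·ψ`, so `D_ψ(x)(y) = ψ(x y - y x)`. -/
def Dd (ψ : A → ℂ) (x : A) : A → ℂ := fun y => ψ (x * y - y * x)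
/-- Jordan identity with the functional in the last slot:
`{a,b,{c,d,φ}} = {{a,b,c},d,φ} - {c,{b,a,d},φ} + {c,d,{a,b,φ}}`. -/
theorem jordan_identity_functional_last_slot (a b c d : A) (φ : A →L[ℂ] ℂ) :
    tOut a b (tOut c d ⇑φ) =
      tOut (tp a b c) d ⇑φ - tOut c (tp b a d) ⇑φ + tOut c d (tOut a b ⇑φ) := by
  funext x
  have h2 : star ((2 : ℂ)⁻¹) = (2 : ℂ)⁻¹ := by simp
  simp only [tOut, Pi.add_apply, Pi.sub_apply, ← map_sub, ← map_add]
  congr 1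
  simp only [tp, star_smul, h2, star_add, star_mul, star_star, smul_mul_assoc, mul_smul_comm,
    mul_add, add_mul, smul_add, mul_assoc]
  abel
end
end

section
/- Let A be a unital C*-algebra. For all a, b, c, e in A and every φ in the dual A*, the Jordan identity holds with the functional in the middle slot of the inner triple product: {a,b,{c,φ,e}} = {{a,b,c},φ,e} - {c,{b,a,φ},e} + {c,φ,{a,b,e}} (an equality of functionals on A). -/
noncomputable section

variable {A : Type*} [NormedRing A] [StarRing A] [CStarRing A]
  [NormedAlgebra ℂ A] [CompleteSpace A] [StarModule ℂ A]

/-- Jordan identity with the functional in the middle slot of the inner triple product: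
`{a,b,{c,φ,e}} = {{a,b,c},φ,e} - {c,{b,a,φ},e} + {c,φ,{a,b,e}}`. -/
theorem jordan_identity_functional_inner_middle_slot (a b c e : A) (φ : A →L[ℂ] ℂ) :
    tOut a b (tMid c ⇑φ e) =
      tMid (tp a b c) ⇑φ e - tMid c (tOut b a ⇑φ) e + tMid c ⇑φ (tp a b e) := by
  funext x
  have key : tp c (tp b a x) e =
      tp (tp a b c) x e - tp a b (tp c x e) + tp c x (tp a b e) := by
    simp only [tp, star_smul, star_add, star_mul, star_star, mul_add, add_mul, smul_add,
      mul_smul_comm, smul_mul_assoc, smul_smul, mul_assoc, star_inv₀, star_ofNat]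
    abel
  simp only [tOut, tMid, Pi.add_apply, Pi.sub_apply, key, map_add, map_sub]
end
end

section
/- Let A be a unital C*-algebra. For all a, c, d, e in A and every φ in the dual A*, the Jordan identity holds with the functional in the outer middle slot: {a,φ,{c,d,e}} = {{a,φ,c},d,e} - {c,{φ,a,d},e} + {c,d,{a,φ,e}} (an equality of functionals on A). -/
noncomputable section

variable {A : Type*} [NormedRing A] [StarRing A] [CStarRing A]
  [NormedAlgebra ℂ A] [CompleteSpace A] [StarModule ℂ A]

/-- Jordan identity with the functional in the outer middle slot:
`{a,φ,{c,d,e}} = {{a,φ,c},d,e} - {c,{φ,a,d},e} + {c,d,{a,φ,e}}`. -/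
theorem jordan_identity_functional_outer_middle_slot (a c d e : A) (φ : A →L[ℂ] ℂ) :
    tMid a ⇑φ (tp c d e) =
      tOut e d (tMid a ⇑φ c) - tMid c (tOut d a ⇑φ) e + tOut c d (tMid a ⇑φ e) := by
  funext x
  have key : tp a x (tp c d e) =
      tp a (tp d e x) c - tp a d (tp c x e) + tp a (tp d c x) e := by
    simp only [tp, star_smul, star_add, star_mul, star_star, star_inv₀, star_ofNat,
      mul_add, add_mul, smul_mul_assoc, mul_smul_comm, smul_add, mul_assoc]
    abel
  simp only [tMid, tOut, Pi.add_apply, Pi.sub_apply]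
  rw [key, map_add, map_sub, map_add, map_sub]
end
end

section
/- Let A be a unital C*-algebra. For all b, c, d, e in A and every φ in the dual A*, the Jordan identity holds with the functional in the first slot: {φ,b,{c,d,e}} = {{φ,b,c},d,e} - {c,{b,φ,d},e} + {c,d,{φ,b,e}} (an equality of functionals on A). -/
noncomputable section

variable {A : Type*} [NormedRing A] [StarRing A] [CStarRing A]
  [NormedAlgebra ℂ A] [CompleteSpace A] [StarModule ℂ A]

/-- Jordan identity with the functional in the first slot:
`{φ,b,{c,d,e}} = {{φ,b,c},d,e} - {c,{b,φ,d},e} + {c,d,{φ,b,e}}`. -/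
theorem jordan_identity_functional_first_slot (b c d e : A) (φ : A →L[ℂ] ℂ) :
    tOut (tp c d e) b ⇑φ =
      tOut e d (tOut c b ⇑φ) - tMid c (tMid b ⇑φ d) e + tOut c d (tOut e b ⇑φ) := by
  funext x
  simp only [Pi.add_apply, Pi.sub_apply, tOut, tMid, Complex.conj_conj]
  rw [← map_sub, ← map_add]
  congr 1
  simp only [tp, star_smul, star_add, star_mul, star_star, star_inv₀, star_ofNat,
    mul_add, add_mul, smul_add, smul_mul_assoc, mul_smul_comm, mul_assoc]
  abel
end
end

section
/- Let A be a unital C*-algebra. For all a, b, d, e in A and every φ in the dual A*, the Jordan identity holds with the functional in the first slot of the inner triple product: {a,b,{φ,d,e}} = {{a,b,φ},d,e} - {φ,{b,a,d},e} + {φ,d,{a,b,e}} (an equality of functionals on A). -/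
noncomputable section

variable {A : Type*} [NormedRing A] [StarRing A] [CStarRing A]
  [NormedAlgebra ℂ A] [CompleteSpace A] [StarModule ℂ A]

/-- Jordan identity with the functional in the first slot of the inner triple product:
`{a,b,{φ,d,e}} = {{a,b,φ},d,e} - {φ,{b,a,d},e} + {φ,d,{a,b,e}}`. -/
theorem jordan_identity_functional_inner_first_slot (a b d e : A) (φ : A →L[ℂ] ℂ) :
    tOut a b (tOut e d ⇑φ) =
      tOut e d (tOut a b ⇑φ) - tOut e (tp b a d) ⇑φ + tOut (tp a b e) d ⇑φ := by
  funext x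
  simp only [tOut, Pi.add_apply, Pi.sub_apply]
  rw [← map_sub, ← map_add]
  congr 1
  have h : star ((2 : ℂ)⁻¹) = (2 : ℂ)⁻¹ := by simp
  simp only [tp, star_smul, star_add, star_mul, star_star, h, mul_add, add_mul, smul_add,
    smul_mul_assoc, mul_smul_comm, mul_assoc]
  abel
end
end

section
/- Let A be a unital C*-algebra. Suppose ξ_1,…,ξ_n, η_1,…,η_n ∈ A* are self-adjoint functionals (ξ_j* = ξ_j, η_j* = η_j) and c_1,…,c_n, d_1,…,d_n ∈ A are self-adjoint elements, and set φ := Σ_{j=1}^n ([ξ_j,c_j] - [η_j,d_j]) ∈ A*. Then for every x ∈ A, D_φ(x*) = Σ_{j=1}^n ({ξ_j,2c_j,x} - {2c_j,ξ_j,x} - {η_j,2d_j,x} + {2d_j,η_j,x}); in particular the map x ↦ D_φ(x*) is an inner triple derivation from A into A*. -/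
noncomputable section

variable {A : Type*} [NormedRing A] [StarRing A] [CStarRing A]
  [NormedAlgebra ℂ A] [CompleteSpace A] [StarModule ℂ A]

theorem aux_key (ξ : A →L[ℂ] ℂ) (c : A) (hξ : fstar ⇑ξ = ⇑ξ) (hc : star c = c) (x y : A) :
    fcomm ⇑ξ c (star x * y - y * star x) =
      tOut x (2 • c) ⇑ξ y - tMid (2 • c) ⇑ξ x y := by
  have h : ∀ z, starRingEnd ℂ (ξ z) = ξ (star z) := by
    intro z
    have := congrFun hξ (star z)
    simpa [fstar] using this
  have e1 : ∀ u v : A, tp (2 • c) u v = c * star u * v + v * star u * c := by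
    intro u v
    unfold tp
    rw [inv_smul_eq_iff₀ (two_ne_zero)]
    simp only [two_smul]
    noncomm_ring
  unfold fcomm tOut tMid
  rw [h, e1, e1, ← map_sub]
  congr 1
  simp only [star_add, star_mul, star_star, hc]
  noncomm_ring

theorem aux_neg (ξ : A →L[ℂ] ℂ) (b x : A) :
    tMid (-b) ⇑ξ x - tOut x (-b) ⇑ξ = tOut x b ⇑ξ - tMid b ⇑ξ x := by
  have e : ∀ u v : A, tp (-b) u v = - tp b u v := by
    intro u v
    unfold tp
    rw [← smul_neg]
    congr 1
    noncomm_ring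
  funext y
  simp only [Pi.sub_apply, tMid, tOut, e, map_neg]
  ring

/-- If `φ := Σ_j ([ξ_j,c_j] - [η_j,d_j])` with `ξ_j, η_j` self-adjoint functionals and
`c_j, d_j` self-adjoint elements, then for every `x`,
`D_φ(x*) = Σ_j ({ξ_j,2c_j,x} - {2c_j,ξ_j,x} - {η_j,2d_j,x} + {2d_j,η_j,x})`;
in particular `x ↦ D_φ(x*)` is an inner triple derivation from `A` into `A*`. -/
theorem inner_derivation_star_is_inner_triple_derivation (n : ℕ)
    (ξ η : Fin n → (A →L[ℂ] ℂ)) (c d : Fin n → A)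
    (hξ : ∀ j, fstar ⇑(ξ j) = ⇑(ξ j)) (hη : ∀ j, fstar ⇑(η j) = ⇑(η j))
    (hc : ∀ j, star (c j) = c j) (hd : ∀ j, star (d j) = d j)
    (φ : A →L[ℂ] ℂ)
    (hφ : ⇑φ = ∑ j, (fcomm ⇑(ξ j) (c j) - fcomm ⇑(η j) (d j))) :
    (∀ x : A,
      Dd ⇑φ (star x) =
        ∑ j, (tOut x (2 • c j) ⇑(ξ j) - tMid (2 • c j) ⇑(ξ j) x
              - tOut x (2 • d j) ⇑(η j) + tMid (2 • d j) ⇑(η j) x)) ∧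
    (∃ (m : ℕ) (bs : Fin m → A) (φs : Fin m → (A →L[ℂ] ℂ)),
      ∀ a : A,
        Dd ⇑φ (star a) = ∑ i, (tMid (bs i) ⇑(φs i) a - tOut a (bs i) ⇑(φs i))) := by
  have main : ∀ x : A,
      Dd ⇑φ (star x) =
        ∑ j, (tOut x (2 • c j) ⇑(ξ j) - tMid (2 • c j) ⇑(ξ j) x
              - tOut x (2 • d j) ⇑(η j) + tMid (2 • d j) ⇑(η j) x) := by
    intro x
    funext y
    unfold Dd
    rw [hφ, Finset.sum_apply, Finset.sum_apply]
    refine Finset.sum_congr rfl fun j _ => ?_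
    simp only [Pi.sub_apply, Pi.add_apply]
    rw [aux_key (ξ j) (c j) (hξ j) (hc j), aux_key (η j) (d j) (hη j) (hd j)]
    ring
  refine ⟨main, n + n, Fin.append (fun j => -(2 • c j)) (fun j => 2 • d j), Fin.append ξ η, ?_⟩
  intro a
  rw [main a, Fin.sum_univ_add]
  simp only [Fin.append_left, Fin.append_right, aux_neg]
  rw [← Finset.sum_add_distrib]
  refine Finset.sum_congr rfl fun j _ => ?_
  abel
end
end

section
/- Let A be a unital C*-algebra, ψ, φ_1,…,φ_n ∈ A*, b_1,…,b_n ∈ A, and ε > 0. If the conjugate-linear operator D_ψ∘* - Σ_{j=1}^n (L(φ_j,b_j) - L(b_j,φ_j)) from A to A* has operator norm at most ε, then for all a, x ∈ A: |ψ([a,x]) - (1/2) Σ_{j=1}^n (φ_j·b_j - b_j*·φ_j*)([a,x])| ≤ 2ε‖a‖‖x‖, where [a,x] = ax - xa. -/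
noncomputable section

variable {A : Type*} [NormedRing A] [StarRing A] [CStarRing A]
  [NormedAlgebra ℂ A] [CompleteSpace A] [StarModule ℂ A]

/-- If the conjugate-linear operator `D_ψ∘* - Σ_j (L(φ_j,b_j) - L(b_j,φ_j))` has
operator norm at most `ε`, then
`|ψ([a,x]) - (1/2) Σ_j (φ_j·b_j - b_j*·φ_j*)([a,x])| ≤ 2ε‖a‖‖x‖`. -/
theorem approx_commutator_estimate (ψ : A →L[ℂ] ℂ) (n : ℕ)
    (φs : Fin n → (A →L[ℂ] ℂ)) (bs : Fin n → A) (ε : ℝ) (hε : 0 < ε)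
    (h : ∀ x y : A,
      ‖(Dd ⇑ψ (star x) - ∑ j, (tOut x (bs j) ⇑(φs j) - tMid (bs j) ⇑(φs j) x)) y‖
        ≤ ε * ‖x‖ * ‖y‖) :
    ∀ a x : A,
      ‖ψ (a * x - x * a) -
          (2 : ℂ)⁻¹ *
            (∑ j, (actR ⇑(φs j) (bs j) - actL (star (bs j)) (fstar ⇑(φs j))))
              (a * x - x * a)‖
        ≤ 2 * ε * ‖a‖ * ‖x‖ := by
  intro a x
  have key : ∀ a y : A, ‖ψ (a * y - y * a) - (2 : ℂ)⁻¹ * ∑ j, (φs j (bs j * a * y) + φs j (y * a * bs j)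
      - fstar ⇑(φs j) (a * y * star (bs j)) - fstar ⇑(φs j) (star (bs j) * y * a))‖
      ≤ ε * ‖a‖ * ‖y‖ := by
    intro a y
    have h1 := h (star a) y
    rw [norm_star] at h1
    refine le_trans (le_of_eq ?_) h1
    congr 1
    simp only [Pi.sub_apply, Finset.sum_apply, Dd, tOut, tMid, tp, fstar, star_star, star_mul, map_smul,
      map_add, smul_eq_mul, map_mul, map_inv₀, Complex.conj_ofNat, Finset.mul_sum, mul_assoc]
    congr 1
    refine Finset.sum_congr rfl fun j _ => ?_
    ring
  have hone : ‖(1 : A)‖ ≤ 1 := by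
    rcases subsingleton_or_nontrivial A with hs | hs
    · rw [Subsingleton.elim (1 : A) 0, norm_zero]; exact zero_le_one
    · exact CStarRing.norm_one.le
  set c := a * x - x * a with hc
  have hcn : ‖c‖ ≤ 2 * (‖a‖ * ‖x‖) := by
    have h1 := norm_sub_le (a * x) (x * a)
    have h2 := norm_mul_le a x
    have h3 := norm_mul_le x a
    rw [hc]; linarith [mul_comm ‖a‖ ‖x‖]
  have k1 := key a x
  have k2 := key x a
  have k3 := key 1 c
  have k3' : ε * ‖(1 : A)‖ * ‖c‖ ≤ ε * (2 * (‖a‖ * ‖x‖)) := by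
    rw [mul_assoc]
    refine mul_le_mul_of_nonneg_left ?_ hε.le
    nlinarith [norm_nonneg c]
  have fadd : ∀ j (u v : A), fstar ⇑(φs j) (u - v) = fstar ⇑(φs j) u - fstar ⇑(φs j) v := by
    intro j u v; simp [fstar]
  set P := ψ c - (2 : ℂ)⁻¹ *
            (∑ j, (actR ⇑(φs j) (bs j) - actL (star (bs j)) (fstar ⇑(φs j)))) c with hP
  have hid : 2 * P = (ψ (a * x - x * a) - (2 : ℂ)⁻¹ * ∑ j, (φs j (bs j * a * x) + φs j (x * a * bs j)
      - fstar ⇑(φs j) (a * x * star (bs j)) - fstar ⇑(φs j) (star (bs j) * x * a)))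
      - (ψ (x * a - a * x) - (2 : ℂ)⁻¹ * ∑ j, (φs j (bs j * x * a) + φs j (a * x * bs j)
      - fstar ⇑(φs j) (x * a * star (bs j)) - fstar ⇑(φs j) (star (bs j) * a * x)))
      + (ψ (1 * c - c * 1) - (2 : ℂ)⁻¹ * ∑ j, (φs j (bs j * 1 * c) + φs j (c * 1 * bs j)
      - fstar ⇑(φs j) (1 * c * star (bs j)) - fstar ⇑(φs j) (star (bs j) * c * 1))) := by
    have e : ∀ p q r s S1 S2 S3 S : ℂ, p = q → r = -q → s = 0 → 2 * S = S1 - S2 + S3 →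
        2 * (p - 2⁻¹ * S) = (q - 2⁻¹ * S1) - (r - 2⁻¹ * S2) + (s - 2⁻¹ * S3) := by
      intro p q r s S1 S2 S3 S h1 h2 h3 h4
      rw [h1, h2, h3]; linear_combination (-2⁻¹) * h4
    rw [hP]
    apply e
    · rw [hc]
    · rw [← map_neg, neg_sub]
    · simp
    · rw [Finset.sum_apply, Finset.mul_sum, ← Finset.sum_sub_distrib, ← Finset.sum_add_distrib]
      refine Finset.sum_congr rfl fun j _ => ?_
      simp only [Pi.sub_apply, actR, actL, hc, mul_one, one_mul, mul_sub, sub_mul, map_sub, fadd, ← mul_assoc]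
      ring
  have hn : ‖2 * P‖ = 2 * ‖P‖ := by simp
  have hfin : ‖2 * P‖ ≤ ε * ‖a‖ * ‖x‖ + ε * ‖x‖ * ‖a‖ + ε * (2 * (‖a‖ * ‖x‖)) := by
    rw [hid]
    exact (norm_add_le _ _).trans (add_le_add ((norm_sub_le _ _).trans (add_le_add k1 k2)) (k3.trans k3'))
  rw [hn] at hfin
  linarith [mul_comm ‖a‖ ‖x‖, show ε * ‖x‖ * ‖a‖ = ε * ‖a‖ * ‖x‖ by ring, show ε * (2 * (‖a‖ * ‖x‖)) = 2 * (ε * ‖a‖ * ‖x‖) by ring]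
end
end

section
/- Let A be a unital C*-algebra, ψ, φ_1,…,φ_n ∈ A*, b_1,…,b_n ∈ A, and ε > 0. If the conjugate-linear operator D_ψ∘* - Σ_{j=1}^n (L(φ_j,b_j) - L(b_j,φ_j)) from A to A* has operator norm at most ε, then for all a, x ∈ A: |4ψ([a,x]) - Σ_{j=1}^n [φ_j,b_j]([a,x]) - Σ_{j=1}^n [φ_j*,b_j*]([a,x])| ≤ 10ε‖a‖‖x‖, where [a,x] = ax - xa. -/
noncomputable section

variable {A : Type*} [NormedRing A] [StarRing A] [CStarRing A]
  [NormedAlgebra ℂ A] [CompleteSpace A] [StarModule ℂ A]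

/-- If the conjugate-linear operator `D_ψ∘* - Σ_j (L(φ_j,b_j) - L(b_j,φ_j))` has
operator norm at most `ε`, then
`|4ψ([a,x]) - Σ_j [φ_j,b_j]([a,x]) - Σ_j [φ_j*,b_j*]([a,x])| ≤ 10ε‖a‖‖x‖`. -/
theorem approx_commutator_estimate' (ψ : A →L[ℂ] ℂ) (n : ℕ)
    (φs : Fin n → (A →L[ℂ] ℂ)) (bs : Fin n → A) (ε : ℝ) (hε : 0 < ε)
    (h : ∀ x y : A,
      ‖(Dd ⇑ψ (star x) - ∑ j, (tOut x (bs j) ⇑(φs j) - tMid (bs j) ⇑(φs j) x)) y‖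
        ≤ ε * ‖x‖ * ‖y‖) :
    ∀ a x : A,
      ‖4 * ψ (a * x - x * a) -
          (∑ j, fcomm ⇑(φs j) (bs j)) (a * x - x * a) -
          (∑ j, fcomm (fstar ⇑(φs j)) (star (bs j))) (a * x - x * a)‖
        ≤ 10 * ε * ‖a‖ * ‖x‖ := by
  intro a x
  have h1 := h (star a) x
  have h2 := h (star x) a
  rw [norm_star] at h1 h2
  have key : 4 * ψ (a * x - x * a) -
          (∑ j, fcomm ⇑(φs j) (bs j)) (a * x - x * a) -
          (∑ j, fcomm (fstar ⇑(φs j)) (star (bs j))) (a * x - x * a) =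
      2 * (Dd ⇑ψ (star (star a)) -
        ∑ j, (tOut (star a) (bs j) ⇑(φs j) - tMid (bs j) ⇑(φs j) (star a))) x -
      2 * (Dd ⇑ψ (star (star x)) -
        ∑ j, (tOut (star x) (bs j) ⇑(φs j) - tMid (bs j) ⇑(φs j) (star x))) a := by
    have hs : (∑ j, fcomm (⇑(φs j)) (bs j) (a * x - x * a)) +
        (∑ j, fcomm (fstar ⇑(φs j)) (star (bs j)) (a * x - x * a)) =
        2 * (∑ j, (tOut (star a) (bs j) ⇑(φs j) x - tMid (bs j) ⇑(φs j) (star a) x)) -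
        2 * (∑ j, (tOut (star x) (bs j) ⇑(φs j) a - tMid (bs j) ⇑(φs j) (star x) a)) := by
      rw [← Finset.sum_add_distrib, Finset.mul_sum, Finset.mul_sum, ← Finset.sum_sub_distrib]
      refine Finset.sum_congr rfl fun j _ => ?_
      simp only [fcomm, fstar, tOut, tMid, tp, star_star, star_mul, star_sub, mul_sub, sub_mul,
        map_add, map_sub, map_smul, smul_eq_mul, map_mul, map_inv₀, mul_assoc, Complex.conj_ofNat]
      ring
    simp only [Pi.sub_apply, Finset.sum_apply] at hs ⊢
    simp only [Dd, star_star, map_sub] at hs ⊢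
    linear_combination -hs
  rw [key]
  refine (norm_sub_le _ _).trans ?_
  rw [norm_mul, norm_mul, Complex.norm_ofNat]
  have : 0 ≤ ε * ‖a‖ * ‖x‖ := by positivity
  nlinarith
end
end

section
/- Let A be a unital C*-algebra, ψ, φ_1,…,φ_n ∈ A* and b_1,…,b_n ∈ A. If D_ψ∘* = Σ_{j=1}^n (L(φ_j,b_j) - L(b_j,φ_j)) as maps from A to A*, then for all a, x ∈ A: ψ([a,x]) = (1/2) Σ_{j=1}^n (φ_j·b_j - b_j*·φ_j*)([a,x]), where [a,x] = ax - xa. -/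
noncomputable section

variable {A : Type*} [NormedRing A] [StarRing A] [CStarRing A]
  [NormedAlgebra ℂ A] [CompleteSpace A] [StarModule ℂ A]

/-- If `D_ψ∘* = Σ_j (L(φ_j,b_j) - L(b_j,φ_j))` as maps from `A` to `A*`, then
`ψ([a,x]) = (1/2) Σ_j (φ_j·b_j - b_j*·φ_j*)([a,x])` for all `a, x ∈ A`. -/
theorem commutator_value_of_exact_inner (ψ : A →L[ℂ] ℂ) (n : ℕ)
    (φs : Fin n → (A →L[ℂ] ℂ)) (bs : Fin n → A)
    (h : ∀ x : A,
      Dd ⇑ψ (star x) = ∑ j, (tOut x (bs j) ⇑(φs j) - tMid (bs j) ⇑(φs j) x)) :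
    ∀ a x : A,
      ψ (a * x - x * a) =
        (2 : ℂ)⁻¹ *
          (∑ j, (actR ⇑(φs j) (bs j) - actL (star (bs j)) (fstar ⇑(φs j))))
            (a * x - x * a) := by
  intro a x
  have h1 := congrFun (h (star a)) x
  have h2 := congrFun (h 1) (x * a)
  simp only [Dd, tOut, tMid, tp, fstar, actL, actR, Finset.sum_apply, Pi.sub_apply, star_star,
    star_one, one_mul, mul_one, sub_self, map_zero, star_mul] at h1 h2 ⊢
  rw [h1, Finset.mul_sum, ← sub_zero (Finset.sum _ _), h2, ← Finset.sum_sub_distrib]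
  refine Finset.sum_congr rfl fun j _ => ?_
  simp only [map_smul, map_add, map_sub, map_mul, smul_eq_mul, star_sub, star_mul, star_star,
    mul_sub, sub_mul, mul_assoc, map_inv₀, map_ofNat]
  ring
end
end

section
/- Let A be a unital C*-algebra, ψ, φ_1,…,φ_n ∈ A* and b_1,…,b_n ∈ A. If D_ψ∘* = Σ_{j=1}^n (L(φ_j,b_j) - L(b_j,φ_j)) as maps from A to A*, then for all a, x ∈ A: 4ψ([a,x]) = Σ_{j=1}^n [φ_j,b_j]([a,x]) + Σ_{j=1}^n [φ_j*,b_j*]([a,x]), where [a,x] = ax - xa. -/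
noncomputable section

variable {A : Type*} [NormedRing A] [StarRing A] [CStarRing A]
  [NormedAlgebra ℂ A] [CompleteSpace A] [StarModule ℂ A]

/-- If `D_ψ∘* = Σ_j (L(φ_j,b_j) - L(b_j,φ_j))` as maps from `A` to `A*`, then
`4ψ([a,x]) = Σ_j [φ_j,b_j]([a,x]) + Σ_j [φ_j*,b_j*]([a,x])` for all `a, x ∈ A`. -/
theorem four_psi_commutator_of_exact_inner (ψ : A →L[ℂ] ℂ) (n : ℕ)
    (φs : Fin n → (A →L[ℂ] ℂ)) (bs : Fin n → A)
    (h : ∀ x : A,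
      Dd ⇑ψ (star x) = ∑ j, (tOut x (bs j) ⇑(φs j) - tMid (bs j) ⇑(φs j) x)) :
    ∀ a x : A,
      4 * ψ (a * x - x * a) =
        (∑ j, fcomm ⇑(φs j) (bs j)) (a * x - x * a) +
          (∑ j, fcomm (fstar ⇑(φs j)) (star (bs j))) (a * x - x * a) := by
  intro a x
  have h1 := congrFun (h (star a)) x
  have h2 := congrFun (h (star x)) a
  simp only [Dd, star_star, Finset.sum_apply, Pi.sub_apply] at h1 h2
  have h3 : ψ (x * a - a * x) = - ψ (a * x - x * a) := by rw [← map_neg, neg_sub]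
  have h4 : 4 * ψ (a * x - x * a)
      = 2 * (ψ (a * x - x * a)) - 2 * (ψ (x * a - a * x)) := by rw [h3]; ring
  rw [h4, h1, h2, Finset.sum_apply, Finset.sum_apply, Finset.mul_sum, Finset.mul_sum,
    ← Finset.sum_sub_distrib, ← Finset.sum_add_distrib]
  refine Finset.sum_congr rfl fun j _ => ?_
  simp only [tOut, tMid, tp, fcomm, fstar, star_star, star_mul, star_sub, mul_sub, sub_mul,
    map_sub, map_add, map_smul, smul_eq_mul, map_mul, map_inv₀, map_ofNat, mul_assoc]
  ring
end
end
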